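/- (Abstract first-order convergence of the implicit θ-scheme, 1/2 ≤ θ ≤ 1, in the L² norm.) Let V be a real inner product space, and let a : V × V → ℝ be a symmetric positive semidefinite bilinear form satisfying ‖v‖² ≤ C₀ a(v,v) for all v ∈ V, with C₀ > 0. Let τ > 0, N ≥ 1, T = Nτ, tⁿ = nτ, and θ ∈ [1/2, 1]. Let u : [0,T] → V be twice continuously differentiable and ρ : [0,T] → V continuously differentiable (in the norm of V), and suppose η⁰, …, η^N ∈ V satisfy, for each n = 1, …, N and every v ∈ V, ⟪(ηⁿ - η^{n-1})/τ, v⟫ + a(θ ηⁿ + (1-θ) η^{n-1}, v) = -⟪(ρ(tⁿ) - ρ(t^{n-1}))/τ, v⟫ + ⟪(u(tⁿ) - u(t^{n-1}))/τ - (θ u'(tⁿ) + (1-θ) u'(t^{n-1})), v⟫. Then ‖η^N‖² ≤ ‖η⁰‖² + C₀ ∫₀^T ‖ρ'(s)‖² ds + C₀ τ² ∫₀^T ‖u''(s)‖² ds. -/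

import Mathlib

open Set intervalIntegral
open scoped RealInnerProductSpace

/-- Squared-norm mean value estimate: `‖f b - f a‖² ≤ (b - a) ∫ ‖f'‖²`. The values need not lie
in a complete space. -/
theorem norm_sub_sq_le_mul_integral_norm_deriv_sq
    {V : Type*} [NormedAddCommGroup V] [InnerProductSpace ℝ V] {f f' : ℝ → V} {a b : ℝ}
    (hab : a < b) (hf : ∀ t ∈ Icc a b, HasDerivWithinAt f (f' t) (Icc a b) t)
    (hf' : ContinuousOn f' (Icc a b)) :
    ‖f b - f a‖ ^ 2 ≤ (b - a) * ∫ s in a..b, ‖f' s‖ ^ 2 := by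
  set x := f b - f a with hx
  have hba : 0 < b - a := sub_pos.2 hab
  have hint : IntervalIntegrable (fun s => ⟪f' s, x⟫) MeasureTheory.volume a b :=
    (hf'.inner continuousOn_const).intervalIntegrable_of_Icc hab.le
  have hsq : IntervalIntegrable (fun s => ‖f' s‖ ^ 2) MeasureTheory.volume a b :=
    (hf'.norm.pow 2).intervalIntegrable_of_Icc hab.le
  have hftc : ∫ s in a..b, ⟪f' s, x⟫ = ⟪f b, x⟫ - ⟪f a, x⟫ := by
    refine integral_eq_sub_of_hasDerivAt_of_le (f := fun s => ⟪f s, x⟫) hab.le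
      (ContinuousOn.inner (fun t ht => (hf t ht).continuousWithinAt) continuousOn_const)
      (fun t ht => ?_) hint
    have hd := (hf t (Ioo_subset_Icc_self ht)).hasDerivAt (Icc_mem_nhds ht.1 ht.2)
    simpa using hd.inner ℝ (hasDerivAt_const t x)
  have hmono : ∫ s in a..b, ⟪f' s, x⟫
      ≤ ∫ s in a..b, ((b - a) / 2 * ‖f' s‖ ^ 2 + ‖x‖ ^ 2 / (2 * (b - a))) := by
    refine integral_mono_on hab.le hint ((hsq.const_mul _).add intervalIntegrable_const)
      fun s _ => (real_inner_le_norm _ _).trans ?_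
    have hyoung : (b - a) / 2 * ‖f' s‖ ^ 2 + ‖x‖ ^ 2 / (2 * (b - a)) - ‖f' s‖ * ‖x‖
        = ((b - a) * ‖f' s‖ - ‖x‖) ^ 2 / (2 * (b - a)) := by
      field_simp
      ring
    have : 0 ≤ ((b - a) * ‖f' s‖ - ‖x‖) ^ 2 / (2 * (b - a)) := by positivity
    linarith
  rw [hftc, ← inner_sub_left, ← hx, real_inner_self_eq_norm_sq,
    integral_add (hsq.const_mul _) intervalIntegrable_const, integral_const_mul,
    integral_const, smul_eq_mul] at hmono
  have hhalf : (b - a) * (‖x‖ ^ 2 / (2 * (b - a))) = ‖x‖ ^ 2 / 2 := by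
    field_simp
  linarith

/-- Consistency error of the θ-scheme on one time step `[a, b]`. -/
theorem norm_theta_consistency_sq_le
    {V : Type*} [NormedAddCommGroup V] [InnerProductSpace ℝ V] {u u' u'' : ℝ → V} {a b θ : ℝ}
    (hab : a < b) (hθ₀ : 0 ≤ θ) (hθ₁ : θ ≤ 1)
    (hu : ∀ t ∈ Icc a b, HasDerivWithinAt u (u' t) (Icc a b) t)
    (hu' : ∀ t ∈ Icc a b, HasDerivWithinAt u' (u'' t) (Icc a b) t)
    (hu'' : ContinuousOn u'' (Icc a b)) :
    ‖u b - u a - (b - a) • (θ • u' b + (1 - θ) • u' a)‖ ^ 2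
      ≤ (b - a) ^ 3 * ∫ s in a..b, ‖u'' s‖ ^ 2 := by
  set c := a + (1 - θ) * (b - a) with hc
  have hba : 0 < b - a := sub_pos.2 hab
  have hK : ContinuousOn (fun s => (c - s) • u'' s) (Icc a b) := by fun_prop
  have hF : ∀ t ∈ Icc a b,
      HasDerivWithinAt (fun s => u s + (c - s) • u' s) ((c - t) • u'' t) (Icc a b) t := by
    intro t ht
    have hd := (hu t ht).add
      (((hasDerivWithinAt_id t (Icc a b)).const_sub c).smul (hu' t ht))
    refine HasDerivWithinAt.congr_deriv hd ?_
    simp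
  have hmain := norm_sub_sq_le_mul_integral_norm_deriv_sq hab hF hK
  have hends : (u b + (c - b) • u' b) - (u a + (c - a) • u' a)
      = u b - u a - (b - a) • (θ • u' b + (1 - θ) • u' a) := by
    rw [hc]
    module
  have hkernel : ∫ s in a..b, ‖(c - s) • u'' s‖ ^ 2
      ≤ ∫ s in a..b, (b - a) ^ 2 * ‖u'' s‖ ^ 2 := by
    refine integral_mono_on hab.le ((hK.norm.pow 2).intervalIntegrable_of_Icc hab.le)
      (((hu''.norm.pow 2).intervalIntegrable_of_Icc hab.le).const_mul _) fun s hs => ?_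
    rw [norm_smul, mul_pow, Real.norm_eq_abs, sq_abs]
    have h₁ : c - s ≤ b - a := by nlinarith [hs.1]
    have h₂ : -(b - a) ≤ c - s := by nlinarith [hs.2]
    gcongr ?_ * _
    exact sq_le_sq' h₂ h₁
  rw [integral_const_mul] at hkernel
  simp only [hends] at hmain
  calc _ ≤ _ := hmain
    _ ≤ (b - a) * ((b - a) ^ 2 * ∫ s in a..b, ‖u'' s‖ ^ 2) := by gcongr
    _ = _ := by ring

/-- One-step energy inequality for the θ-scheme with right-hand side `-p + r`. -/
theorem theta_step_energy_le
    {V : Type*} [NormedAddCommGroup V] [InnerProductSpace ℝ V]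
    {x y p r : V} {A C₀ τ θ : ℝ} (hC₀ : 0 < C₀) (hτ : 0 < τ) (hθ : 1 / 2 ≤ θ)
    (hA : ‖θ • y + (1 - θ) • x‖ ^ 2 ≤ C₀ * A)
    (h : ⟪(1 / τ) • (y - x), θ • y + (1 - θ) • x⟫ + A
      = -⟪p, θ • y + (1 - θ) • x⟫ + ⟪r, θ • y + (1 - θ) • x⟫) :
    ‖y‖ ^ 2 ≤ ‖x‖ ^ 2 + C₀ * τ * (‖p‖ ^ 2 + ‖r‖ ^ 2) := by
  set w := θ • y + (1 - θ) • x with hw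
  have hdiff : ‖y‖ ^ 2 - ‖x‖ ^ 2 ≤ 2 * ⟪y - x, w⟫ := by
    have hid : 2 * ⟪y - x, w⟫ = ‖y‖ ^ 2 - ‖x‖ ^ 2 + (2 * θ - 1) * ‖y - x‖ ^ 2 := by
      rw [norm_sub_sq_real, hw]
      simp only [inner_sub_left, inner_add_right, real_inner_smul_right,
        real_inner_self_eq_norm_sq, real_inner_comm y x]
      ring
    nlinarith [sq_nonneg ‖y - x‖]
  have hp : -(2 * C₀ * ⟪p, w⟫) ≤ C₀ ^ 2 * ‖p‖ ^ 2 + ‖w‖ ^ 2 := by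
    have := (neg_le_abs _).trans (abs_real_inner_le_norm p w)
    nlinarith [sq_nonneg (C₀ * ‖p‖ - ‖w‖)]
  have hr : 2 * C₀ * ⟪r, w⟫ ≤ C₀ ^ 2 * ‖r‖ ^ 2 + ‖w‖ ^ 2 := by
    have := real_inner_le_norm r w
    nlinarith [sq_nonneg (C₀ * ‖r‖ - ‖w‖)]
  rw [real_inner_smul_left] at h
  have hinner : ⟪y - x, w⟫ = τ * (-⟪p, w⟫ + ⟪r, w⟫ - A) := by
    rw [← h]
    field_simp
    ring
  have hsource : 2 * (-⟪p, w⟫ + ⟪r, w⟫ - A) ≤ C₀ * (‖p‖ ^ 2 + ‖r‖ ^ 2) := by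
    refine le_of_mul_le_mul_left ?_ hC₀
    linarith
  have := mul_le_mul_of_nonneg_left hsource hτ.le
  linarith

/-- Abstract first-order L² convergence of the implicit θ-scheme, `θ ∈ [1/2, 1]`:
`‖η^N‖² ≤ ‖η⁰‖² + C₀ ∫₀ᵀ ‖ρ'‖² + C₀ τ² ∫₀ᵀ ‖u''‖²`. -/
theorem theta_scheme_L2_convergence
    {V : Type*} [NormedAddCommGroup V] [InnerProductSpace ℝ V]
    (a : V →ₗ[ℝ] V →ₗ[ℝ] ℝ)
    (hsym : ∀ x y : V, a x y = a y x)
    (hpos : ∀ v : V, 0 ≤ a v v)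
    (C₀ : ℝ) (hC₀ : 0 < C₀)
    (hpoincare : ∀ v : V, ‖v‖ ^ 2 ≤ C₀ * a v v)
    (τ : ℝ) (hτ : 0 < τ) (N : ℕ) (hN : 1 ≤ N) (T : ℝ) (hT : T = N * τ)
    (θ : ℝ) (hθ : θ ∈ Set.Icc (1 / 2 : ℝ) 1)
    (u u' u'' ρ ρ' : ℝ → V)
    (hu : ∀ t ∈ Icc (0 : ℝ) T, HasDerivWithinAt u (u' t) (Icc 0 T) t)
    (hu' : ∀ t ∈ Icc (0 : ℝ) T, HasDerivWithinAt u' (u'' t) (Icc 0 T) t)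
    (hu'' : ContinuousOn u'' (Icc 0 T))
    (hρ : ∀ t ∈ Icc (0 : ℝ) T, HasDerivWithinAt ρ (ρ' t) (Icc 0 T) t)
    (hρ' : ContinuousOn ρ' (Icc 0 T))
    (η : ℕ → V)
    (hscheme : ∀ n, 1 ≤ n → n ≤ N → ∀ v : V,
      ⟪(1 / τ) • (η n - η (n - 1)), v⟫ + a (θ • η n + (1 - θ) • η (n - 1)) v
        = -⟪(1 / τ) • (ρ ((n : ℝ) * τ) - ρ (((n : ℝ) - 1) * τ)), v⟫
          + ⟪(1 / τ) • (u ((n : ℝ) * τ) - u (((n : ℝ) - 1) * τ))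
              - (θ • u' ((n : ℝ) * τ) + (1 - θ) • u' (((n : ℝ) - 1) * τ)), v⟫) :
    ‖η N‖ ^ 2 ≤ ‖η 0‖ ^ 2 + C₀ * (∫ s in (0 : ℝ)..T, ‖ρ' s‖ ^ 2)
      + C₀ * τ ^ 2 * ∫ s in (0 : ℝ)..T, ‖u'' s‖ ^ 2 := by
  have hadj : ∀ (g : ℝ → V), ContinuousOn g (Icc 0 T) → ∀ n : ℕ, n + 1 ≤ N →
      (∫ s in (0 : ℝ)..(n : ℝ) * τ, ‖g s‖ ^ 2)
        + (∫ s in (n : ℝ) * τ..((n + 1 : ℕ) : ℝ) * τ, ‖g s‖ ^ 2)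
        = ∫ s in (0 : ℝ)..((n + 1 : ℕ) : ℝ) * τ, ‖g s‖ ^ 2 := by
    intro g hg n hn
    have hb : ((n + 1 : ℕ) : ℝ) * τ ≤ T := by rw [hT]; gcongr
    have ha : (n : ℝ) * τ ≤ ((n + 1 : ℕ) : ℝ) * τ := by gcongr; omega
    have h₀ : 0 ≤ (n : ℝ) * τ := by positivity
    exact integral_add_adjacent_intervals
      (((hg.mono (Icc_subset_Icc_right (ha.trans hb))).norm.pow 2).intervalIntegrable_of_Icc h₀)
      (((hg.mono (Icc_subset_Icc h₀ hb)).norm.pow 2).intervalIntegrable_of_Icc ha)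
  have hmain : ∀ n : ℕ, n ≤ N → ‖η n‖ ^ 2 ≤ ‖η 0‖ ^ 2
      + C₀ * (∫ s in (0 : ℝ)..(n : ℝ) * τ, ‖ρ' s‖ ^ 2)
      + C₀ * τ ^ 2 * ∫ s in (0 : ℝ)..(n : ℝ) * τ, ‖u'' s‖ ^ 2 := by
    intro n
    induction n with
    | zero => simp
    | succ n ih =>
      intro hn
      have hstep := hscheme (n + 1) (by omega) hn (θ • η (n + 1) + (1 - θ) • η n)
      have hprev : ((n + 1 : ℕ) : ℝ) - 1 = n := by push_cast; ring
      rw [Nat.add_sub_cancel, hprev] at hstep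
      have henergy := theta_step_energy_le hC₀ hτ hθ.1 (hpoincare _) hstep
      rw [← hadj ρ' hρ' n hn, ← hadj u'' hu'' n hn]
      set s := (n : ℝ) * τ with hs
      set t := ((n + 1 : ℕ) : ℝ) * τ with ht
      have hlen : t - s = τ := by rw [ht, hs]; push_cast; ring
      have hst : s < t := by linarith
      have hsub : Icc s t ⊆ Icc 0 T := by
        refine Icc_subset_Icc (by positivity) ?_
        rw [hT, ht]
        gcongr
      have hproj := norm_sub_sq_le_mul_integral_norm_deriv_sq hst
        (fun r hr => (hρ r (hsub hr)).mono hsub) (hρ'.mono hsub)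
      have hcons := norm_theta_consistency_sq_le hst (by linarith [hθ.1]) hθ.2
        (fun r hr => (hu r (hsub hr)).mono hsub) (fun r hr => (hu' r (hsub hr)).mono hsub)
        (hu''.mono hsub)
      rw [hlen] at hproj hcons
      have hscale : ∀ z : V, τ ^ 2 * ‖(1 / τ) • z‖ ^ 2 = ‖z‖ ^ 2 := by
        intro z
        rw [norm_smul, Real.norm_of_nonneg (by positivity)]
        field_simp
      have hp : τ * ‖(1 / τ) • (ρ t - ρ s)‖ ^ 2 ≤ ∫ r in s..t, ‖ρ' r‖ ^ 2 := by
        refine le_of_mul_le_mul_left ?_ hτ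
        linarith [hscale (ρ t - ρ s)]
      have hr : τ * ‖(1 / τ) • (u t - u s) - (θ • u' t + (1 - θ) • u' s)‖ ^ 2
          ≤ τ ^ 2 * ∫ r in s..t, ‖u'' r‖ ^ 2 := by
        refine le_of_mul_le_mul_left ?_ hτ
        have heq : (1 / τ) • (u t - u s) - (θ • u' t + (1 - θ) • u' s)
            = (1 / τ) • (u t - u s - τ • (θ • u' t + (1 - θ) • u' s)) := by
          rw [smul_sub (1 / τ) (u t - u s), smul_smul, one_div_mul_cancel hτ.ne', one_smul]
        rw [heq]
        linarith [hscale (u t - u s - τ • (θ • u' t + (1 - θ) • u' s))]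
      have := mul_le_mul_of_nonneg_left hp hC₀.le
      have := mul_le_mul_of_nonneg_left hr hC₀.le
      linarith [ih (by omega)]
  simpa only [hT] using hmain N le_rfl
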